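/- arXiv:2206.00618 — 9 statements merged into one kernel-verified Lean document; each statement's English description precedes it below -/
import Mathlib

section
/- Let f, g : ℝⁿ → ℝ be quadratic functionals, f(x) = xᵀA_f x + 2 b_fᵀ x + c_f and g(x) = xᵀA_g x + 2 b_gᵀ x + c_g, with A_f, A_g symmetric real n×n matrices. Suppose there exists x₀ ∈ ℝⁿ with g(x₀) < 0. Then the following are equivalent: (i) there is no x ∈ ℝⁿ with f(x) < 0 and g(x) ≤ 0; (ii) there exists γ ≥ 0 such that f(x) + γ·g(x) ≥ 0 for all x ∈ ℝⁿ. -/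
open Matrix

/-!
Put `P = {x | g x > 0}` and `N = {y | g y < 0}`. A multiplier `γ` has to lie above all the ratios
`-f x / g x` for `x ∈ P` and below all the ratios `f y / -g y` for `y ∈ N`, so it exists as soon as
`f x * g y ≤ f y * g x` for every such pair. This inequality only involves the line through `x` and
`y`, hence two quadratic polynomials `p`, `q` of one variable `t` with `q 0 < 0 < q 1`. The
combination `r = p 0 * q - q 0 * p` vanishes at `0` and is nonnegative at the roots of `q`. If `q`
has degree two, one root lies in `(0, 1)` and the other outside `[0, 1]`, which forces `r 1 ≥ 0`;
the affine case follows by perturbing the leading coefficient of `q`.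
-/

open scoped Topology

section Univariate

variable {a b c d e k : ℝ}

lemma exists_quadratic_root_mem_Ioo (h0 : k < 0) (h1 : 0 < d + e + k) :
    ∃ t ∈ Set.Ioo (0 : ℝ) 1, d * t ^ 2 + e * t + k = 0 :=
  intermediate_value_Ioo (f := fun t : ℝ => d * t ^ 2 + e * t + k) zero_le_one (by fun_prop)
    ⟨by simpa using h0, by simpa using h1⟩

lemma exists_quadratic_root_neg (hd : 0 < d) (h0 : k < 0) :
    ∃ t < 0, d * t ^ 2 + e * t + k = 0 := by
  have hdisc : e ^ 2 < discrim d e k := by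
    rw [discrim]
    linarith [mul_neg_of_pos_of_neg hd h0]
  have hsqrt : discrim d e k = √(discrim d e k) * √(discrim d e k) :=
    (Real.mul_self_sqrt ((sq_nonneg e).trans hdisc.le)).symm
  have hneg : -e - √(discrim d e k) < 0 := by
    linarith [neg_abs_le e, Real.lt_sqrt_of_sq_lt ((sq_abs e).trans_lt hdisc)]
  refine ⟨_, div_neg_of_neg_of_pos hneg (by positivity : 0 < 2 * d), ?_⟩
  rw [sq]
  exact (quadratic_eq_zero_iff hd.ne' hsqrt _).2 (.inr rfl)

lemma exists_quadratic_root_one_lt (hd : d < 0) (h1 : 0 < d + e + k) :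
    ∃ t > 1, d * t ^ 2 + e * t + k = 0 := by
  obtain ⟨s, hs, hroot⟩ :=
    exists_quadratic_root_neg (e := 2 * d + e) (neg_pos.2 hd) (neg_lt_zero.2 h1)
  exact ⟨1 - s, by linarith, by linear_combination -hroot⟩

lemma add_nonneg_of_nonneg_at_quadratic_roots (hd : d ≠ 0) (h0 : k < 0) (h1 : 0 < d + e + k)
    (hroots : ∀ t, d * t ^ 2 + e * t + k = 0 → 0 ≤ t * (a * t + b)) : 0 ≤ a + b := by
  obtain ⟨v, ⟨hv0, hv1⟩, hv⟩ := exists_quadratic_root_mem_Ioo h0 h1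
  have hline_v : 0 ≤ a * v + b := nonneg_of_mul_nonneg_right (hroots v hv) hv0
  rcases hd.lt_or_gt with hd | hd
  · obtain ⟨u, hu1, hu⟩ := exists_quadratic_root_one_lt hd h1
    have hline_u : 0 ≤ a * u + b := nonneg_of_mul_nonneg_right (hroots u hu) (by linarith)
    have hconvex : (u - v) * (a + b) = (u - 1) * (a * v + b) + (1 - v) * (a * u + b) := by ring
    refine nonneg_of_mul_nonneg_right (a := u - v) ?_ (by linarith)
    rw [hconvex]
    exact add_nonneg (mul_nonneg (by linarith) hline_v) (mul_nonneg (by linarith) hline_u)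
  · obtain ⟨u, hu0, hu⟩ := exists_quadratic_root_neg hd h0
    have hline_u : a * u + b ≤ 0 := nonpos_of_mul_nonneg_right (hroots u hu) hu0
    have hslope : 0 ≤ a := nonneg_of_mul_nonneg_right (a := v - u) (by linarith) (by linarith)
    linarith [mul_le_of_le_one_right hslope hv1.le]

lemma quadratic_cross_mul_le_of_ne_zero (hd : d ≠ 0) (h0 : k < 0) (h1 : 0 < d + e + k)
    (h : ∀ t : ℝ, d * t ^ 2 + e * t + k = 0 → 0 ≤ a * t ^ 2 + b * t + c) :
    (a + b + c) * k ≤ c * (d + e + k) := by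
  suffices 0 ≤ (c * d - k * a) + (c * e - k * b) by linarith
  refine add_nonneg_of_nonneg_at_quadratic_roots hd h0 h1 fun t ht => ?_
  calc 0 ≤ -k * (a * t ^ 2 + b * t + c) := mul_nonneg (neg_pos.2 h0).le (h t ht)
    _ = t * ((c * d - k * a) * t + (c * e - k * b)) := by linear_combination -c * ht

lemma quadratic_cross_mul_le (h0 : k < 0) (h1 : 0 < d + e + k)
    (h : ∀ t : ℝ, d * t ^ 2 + e * t + k ≤ 0 → 0 ≤ a * t ^ 2 + b * t + c) :
    (a + b + c) * k ≤ c * (d + e + k) := by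
  rcases ne_or_eq d 0 with hd | rfl
  · exact quadratic_cross_mul_le_of_ne_zero hd h0 h1 fun t ht => h t ht.le
  -- Adding `ε * t ^ 2` only shrinks the set where `e * t + k` is nonpositive; then let `ε → 0`.
  have hperturbed : ∀ ε > 0, (a + b + c) * k ≤ c * (ε + e + k) := fun ε hε =>
    quadratic_cross_mul_le_of_ne_zero hε.ne' h0 (by linarith) fun t ht =>
      h t (by linarith [mul_nonneg hε.le (sq_nonneg t)])
  have hlim : Filter.Tendsto (fun ε => c * (ε + e + k)) (𝓝[>] 0) (𝓝 (c * (0 + e + k))) :=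
    (Continuous.tendsto (by fun_prop) 0).mono_left nhdsWithin_le_nhds
  exact ge_of_tendsto hlim (eventually_mem_nhdsWithin.mono hperturbed)

end Univariate

lemma exists_nonneg_multiplier {α : Type*} {f g : α → ℝ} (hg : ∃ y, g y < 0)
    (hfg : ∀ x, g x ≤ 0 → 0 ≤ f x)
    (hcross : ∀ x y, 0 < g x → g y < 0 → f x * g y ≤ f y * g x) :
    ∃ γ : ℝ, 0 ≤ γ ∧ ∀ x, 0 ≤ f x + γ * g x := by
  obtain ⟨γ, hlower, hupper⟩ : (upperBounds (insert 0 ((fun x => -f x / g x) '' {x | 0 < g x})) ∩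
      lowerBounds ((fun y => f y / -g y) '' {y | g y < 0})).Nonempty := by
    refine exists_between_of_forall_le (Set.insert_nonempty _ _) (Set.Nonempty.image _ hg) ?_
    rintro _ (rfl | ⟨x, hx, rfl⟩) _ ⟨y, hy, rfl⟩
    · exact div_nonneg (hfg y (le_of_lt hy)) (neg_pos.2 hy).le
    · rw [div_le_div_iff₀ hx (neg_pos.2 hy)]
      linarith [hcross x y hx hy]
  refine ⟨γ, hlower (Set.mem_insert _ _), fun x => ?_⟩
  rcases lt_trichotomy (g x) 0 with hx | hx | hx
  · have hγ : γ ≤ f x / -g x := hupper ⟨x, hx, rfl⟩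
    rw [le_div_iff₀ (neg_pos.2 hx)] at hγ
    linarith
  · simpa [hx] using hfg x hx.le
  · have hγ : -f x / g x ≤ γ := hlower (.inr ⟨x, hx, rfl⟩)
    rw [div_le_iff₀ hx] at hγ
    linarith

/-- A real function on a real vector space, of any dimension, is a quadratic functional if it is the
sum of a quadratic form, a linear form and a constant. The factor `2` that customarily precedes the
linear part in coordinates is absorbed into `ℓ`. -/
def IsQuadraticFunctional {E : Type*} [AddCommGroup E] [Module ℝ E] (f : E → ℝ) : Prop :=
  ∃ (Q : QuadraticForm ℝ E) (ℓ : Module.Dual ℝ E) (c : ℝ), ∀ x, f x = Q x + ℓ x + c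

lemma isQuadraticFunctional_matrix {ι : Type*} [Fintype ι] (A : Matrix ι ι ℝ) (b : ι → ℝ) (c : ℝ) :
    IsQuadraticFunctional fun x : ι → ℝ => x ⬝ᵥ A *ᵥ x + 2 * (b ⬝ᵥ x) + c := by
  classical
  refine ⟨A.toQuadraticForm', 2 • dotProductBilin ℝ ℝ b, c, fun x => ?_⟩
  simp [Matrix.toQuadraticForm', Matrix.toLinearMap₂'_apply']

namespace IsQuadraticFunctional

variable {E : Type*} [AddCommGroup E] [Module ℝ E] {f g : E → ℝ}

lemma exists_eq_on_line (hf : IsQuadraticFunctional f) (y v : E) :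
    ∃ a b : ℝ, ∀ t : ℝ, f (y + t • v) = a * t ^ 2 + b * t + f y := by
  obtain ⟨Q, ℓ, c, hf⟩ := hf
  refine ⟨Q v, QuadraticMap.polar Q y v + ℓ v, fun t => ?_⟩
  simp only [hf, QuadraticMap.map_add Q, QuadraticMap.map_smul, QuadraticMap.polar_smul_right,
    map_add, map_smul, smul_eq_mul]
  ring

lemma cross_mul_le (hf : IsQuadraticFunctional f) (hg : IsQuadraticFunctional g)
    (hfg : ∀ z, g z ≤ 0 → 0 ≤ f z) {x y : E} (hx : 0 < g x) (hy : g y < 0) :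
    f x * g y ≤ f y * g x := by
  obtain ⟨a, b, hf_line⟩ := hf.exists_eq_on_line y (x - y)
  obtain ⟨d, e, hg_line⟩ := hg.exists_eq_on_line y (x - y)
  have hfx : f x = a + b + f y := by simpa using hf_line 1
  have hgx : g x = d + e + g y := by simpa using hg_line 1
  rw [hfx, hgx]
  refine quadratic_cross_mul_le hy (hgx ▸ hx) fun t ht => ?_
  rw [← hf_line]
  exact hfg _ ((hg_line t).trans_le ht)

end IsQuadraticFunctional

theorem stmt_0_general {E : Type*} [AddCommGroup E] [Module ℝ E] {f g : E → ℝ}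
    (hf : IsQuadraticFunctional f) (hg : IsQuadraticFunctional g) (hslater : ∃ x₀, g x₀ < 0) :
    (¬ ∃ x, f x < 0 ∧ g x ≤ 0) ↔ ∃ γ : ℝ, 0 ≤ γ ∧ ∀ x, 0 ≤ f x + γ * g x := by
  constructor
  · intro hinfeasible
    have hfg : ∀ x, g x ≤ 0 → 0 ≤ f x := fun x hx =>
      not_lt.1 fun hfx => hinfeasible ⟨x, hfx, hx⟩
    exact exists_nonneg_multiplier hslater hfg fun _ _ => hf.cross_mul_le hg hfg
  · rintro ⟨γ, hγ, hsum⟩ ⟨x, hfx, hgx⟩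
    exact (hsum x).not_gt (add_neg_of_neg_of_nonpos hfx (mul_nonpos_of_nonneg_of_nonpos hγ hgx))

/-- Yakubovich S-Lemma: for quadratic functionals `f`, `g` on ℝⁿ with a Slater
point `g x₀ < 0`, the system `f x < 0`, `g x ≤ 0` has no solution iff there is a
nonnegative multiplier `γ` with `f x + γ * g x ≥ 0` for all `x`. -/
theorem stmt_0 (n : ℕ) (Af Ag : Matrix (Fin n) (Fin n) ℝ)
    (hAf : Af.IsSymm) (hAg : Ag.IsSymm)
    (bf bg : Fin n → ℝ) (cf cg : ℝ)
    (f g : (Fin n → ℝ) → ℝ)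
    (hf : ∀ x, f x = x ⬝ᵥ Af.mulVec x + 2 * (bf ⬝ᵥ x) + cf)
    (hg : ∀ x, g x = x ⬝ᵥ Ag.mulVec x + 2 * (bg ⬝ᵥ x) + cg)
    (hslater : ∃ x₀ : Fin n → ℝ, g x₀ < 0) :
    (¬ ∃ x : Fin n → ℝ, f x < 0 ∧ g x ≤ 0) ↔
      ∃ γ : ℝ, 0 ≤ γ ∧ ∀ x : Fin n → ℝ, 0 ≤ f x + γ * g x := by
  exact stmt_0_general (funext hf ▸ isQuadraticFunctional_matrix Af bf cf)
    (funext hg ▸ isQuadraticFunctional_matrix Ag bg cg) hslater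
end

section
/- Let f_0, …, f_m : ℝⁿ → ℝ be quadratic functionals f_k(x) = xᵀA_k x + 2 b_kᵀ x + c_k (A_k symmetric). Suppose the set Ω₀ is convex. Then exactly one of the following two statements holds: (1) there exists x ∈ ℝⁿ such that f_k(x) < 0 for all k = 0, …, m; (2) there exists γ ∈ ℝ^{m+1} with γ_k ≥ 0 for all k and γ ≠ 0 such that Σ_{k=0}^{m} γ_k f_k(x) ≥ 0 for all x ∈ ℝⁿ. -/
open Matrix

/-!
If no `x` makes all `f k x` negative, then `0` lies outside `Ω₀`, which is open and by assumption
convex, so Hahn–Banach gives a `γ` that is positive on `Ω₀`. As `Ω₀` is closed under increasing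
coordinates, `γ` has nonnegative entries; as `f(x)` is a limit of points of `Ω₀`, the weighted sum
`∑ k, γ k * f k x` is nonnegative.
-/

theorem map_nonneg_of_isUpperSet_of_forall_pos {𝕜 E : Type*} [Field 𝕜] [LinearOrder 𝕜]
    [IsStrictOrderedRing 𝕜] [AddCommGroup E] [Preorder E] [AddLeftMono E] [Module 𝕜 E]
    [PosSMulMono 𝕜 E] {s : Set E} (hs : IsUpperSet s) (hne : s.Nonempty) (g : E →ₗ[𝕜] 𝕜)
    (hg : ∀ v ∈ s, 0 < g v) {w : E} (hw : 0 ≤ w) : 0 ≤ g w := by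
  by_contra! hgw
  obtain ⟨v, hv⟩ := hne
  -- The ray from `v` in the direction `w` stays in `s` but meets the kernel of `g` at time `t`.
  obtain ⟨t, ht, htw⟩ : ∃ t : 𝕜, 0 ≤ t ∧ t * g w = -g v :=
    ⟨g v / -g w, (div_pos (hg v hv) (neg_pos.2 hgw)).le, by field_simp [hgw.ne]⟩
  have hmem : v + t • w ∈ s := hs (le_add_of_nonneg_right (smul_nonneg ht hw)) hv
  have hzero : g (v + t • w) = 0 := by
    rw [map_add, map_smul, smul_eq_mul, htw, add_neg_cancel]
  exact (hg _ hmem).ne' hzero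

section Fintype

variable {ι : Type*} [Fintype ι]

theorem exists_nonneg_forall_dotProduct_pos {s : Set (ι → ℝ)} (hconv : Convex ℝ s)
    (hopen : IsOpen s) (hupper : IsUpperSet s) (hne : s.Nonempty) (h0 : 0 ∉ s) :
    ∃ γ : ι → ℝ, 0 ≤ γ ∧ ∀ v ∈ s, 0 < γ ⬝ᵥ v := by
  classical
  obtain ⟨g, hg⟩ := geometric_hahn_banach_point_open hconv hopen h0
  obtain ⟨γ, hγ⟩ := (dotProductEquiv ℝ ι).surjective g.toLinearMap
  have hgγ (v : ι → ℝ) : g v = γ ⬝ᵥ v := (LinearMap.congr_fun hγ v).symm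
  have hpos : ∀ v ∈ s, 0 < g v := by simpa only [map_zero] using hg
  refine ⟨γ, fun k ↦ ?_, fun v hv ↦ hgγ v ▸ hpos v hv⟩
  have hsingle : (0 : ι → ℝ) ≤ Pi.single k 1 := Pi.single_nonneg.2 zero_le_one
  simpa [hgγ] using map_nonneg_of_isUpperSet_of_forall_pos hupper hne g.toLinearMap hpos hsingle

theorem dotProduct_neg_of_nonneg_of_ne_zero {R : Type*} [Ring R] [PartialOrder R]
    [IsStrictOrderedRing R] {γ v : ι → R} (hγ : 0 ≤ γ) (hγ0 : γ ≠ 0) (hv : ∀ k, v k < 0) :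
    γ ⬝ᵥ v < 0 := by
  obtain ⟨j, hj⟩ := Function.ne_iff.1 hγ0
  exact Finset.sum_neg' (fun k _ ↦ mul_nonpos_of_nonneg_of_nonpos (hγ k) (hv k).le)
    ⟨j, Finset.mem_univ j, mul_neg_of_pos_of_neg ((hγ j).lt_of_ne' hj) (hv j)⟩

end Fintype

section StrictUpperImage

variable {ι X : Type*}

/-- The set `Ω₀` of vectors strictly dominating, in every coordinate, some point of the joint image
of the family `f`; that is, the joint image plus the strictly positive orthant. -/
def strictUpperImage (f : ι → X → ℝ) : Set (ι → ℝ) :=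
  {v | ∃ x, ∀ k, f k x < v k}

variable (f : ι → X → ℝ)

theorem strictUpperImage_eq_iUnion_pi_Ioi :
    strictUpperImage f = ⋃ x, Set.univ.pi fun k ↦ Set.Ioi (f k x) := by
  ext v
  simp [strictUpperImage]

theorem isOpen_strictUpperImage [Finite ι] : IsOpen (strictUpperImage f) := by
  rw [strictUpperImage_eq_iUnion_pi_Ioi]
  exact isOpen_iUnion fun x ↦ isOpen_set_pi Set.finite_univ fun k _ ↦ isOpen_Ioi

theorem isUpperSet_strictUpperImage : IsUpperSet (strictUpperImage f) :=
  fun _ _ hvw ⟨x, hx⟩ ↦ ⟨x, fun k ↦ (hx k).trans_le (hvw k)⟩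

theorem strictUpperImage_nonempty [Nonempty X] : (strictUpperImage f).Nonempty :=
  let ⟨x⟩ := ‹Nonempty X›
  ⟨fun k ↦ f k x + 1, x, fun k ↦ lt_add_one (f k x)⟩

theorem mem_closure_strictUpperImage (x : X) : (fun k ↦ f k x) ∈ closure (strictUpperImage f) := by
  have hsub : (Set.univ.pi fun k ↦ Set.Ioi (f k x)) ⊆ strictUpperImage f := by
    rw [strictUpperImage_eq_iUnion_pi_Ioi]
    exact Set.subset_iUnion (fun x ↦ Set.univ.pi fun k ↦ Set.Ioi (f k x)) x
  apply closure_mono hsub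
  simp [closure_pi_set]

variable {f}

theorem exists_nonneg_ne_zero_forall_dotProduct_nonneg [Fintype ι] [Nonempty X]
    (hΩ : Convex ℝ (strictUpperImage f)) (hneg : ¬∃ x, ∀ k, f k x < 0) :
    ∃ γ : ι → ℝ, 0 ≤ γ ∧ γ ≠ 0 ∧ ∀ x, 0 ≤ γ ⬝ᵥ fun k ↦ f k x := by
  have hne := strictUpperImage_nonempty f
  obtain ⟨γ, hγ, hpos⟩ := exists_nonneg_forall_dotProduct_pos hΩ (isOpen_strictUpperImage f)
    (isUpperSet_strictUpperImage f) hne hneg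
  refine ⟨γ, hγ, ?_, fun x ↦ ?_⟩
  · rintro rfl
    obtain ⟨v, hv⟩ := hne
    simpa using hpos v hv
  · exact le_on_closure (fun v hv ↦ (hpos v hv).le) continuousOn_const
      (by fun_prop) (mem_closure_strictUpperImage f x)

theorem stmt_1_general [Fintype ι] [Nonempty X] (hΩ : Convex ℝ (strictUpperImage f)) :
    Xor (∃ x, ∀ k, f k x < 0)
      (∃ γ : ι → ℝ, (∀ k, 0 ≤ γ k) ∧ γ ≠ 0 ∧ ∀ x, 0 ≤ ∑ k, γ k * f k x) := by
  by_cases hneg : ∃ x, ∀ k, f k x < 0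
  · refine Or.inl ⟨hneg, fun ⟨γ, hγ, hγ0, hsum⟩ ↦ ?_⟩
    obtain ⟨x, hx⟩ := hneg
    exact (dotProduct_neg_of_nonneg_of_ne_zero hγ hγ0 hx).not_ge (hsum x)
  · exact Or.inr ⟨exists_nonneg_ne_zero_forall_dotProduct_nonneg hΩ hneg, hneg⟩

end StrictUpperImage

/-- Generalized S-Lemma: if the set Ω₀ associated with the quadratic functionals
`f 0, …, f m` is convex, then exactly one of the following holds:
(1) some `x` satisfies `f k x < 0` for all `k`;
(2) some nonzero nonnegative `γ` satisfies `∑ k, γ k * f k x ≥ 0` for all `x`. -/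
theorem stmt_1 (n m : ℕ)
    (A : Fin (m + 1) → Matrix (Fin n) (Fin n) ℝ) (hA : ∀ k, (A k).IsSymm)
    (b : Fin (m + 1) → Fin n → ℝ) (c : Fin (m + 1) → ℝ)
    (f : Fin (m + 1) → (Fin n → ℝ) → ℝ)
    (hf : ∀ k x, f k x = x ⬝ᵥ (A k).mulVec x + 2 * (b k ⬝ᵥ x) + c k)
    (hΩ : Convex ℝ {v : Fin (m + 1) → ℝ | ∃ x : Fin n → ℝ, ∀ k, f k x < v k}) :
    Xor' (∃ x : Fin n → ℝ, ∀ k, f k x < 0)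
      (∃ γ : Fin (m + 1) → ℝ, (∀ k, 0 ≤ γ k) ∧ γ ≠ 0 ∧
        ∀ x : Fin n → ℝ, 0 ≤ ∑ k, γ k * f k x) := by
  exact stmt_1_general hΩ
end

section
/- Consider the QCQP problem. Let x* be feasible for the QCQP and suppose there exist multipliers γ_1, …, γ_m ≥ 0 such that: (i) (A_J + Σ_{k=1}^m γ_k A_k) x* + (b_J + Σ_{k=1}^m γ_k b_k) = 0; (ii) γ_k f_k(x*) = 0 for k = 1, …, m; (iii) A_J + Σ_{k=1}^m γ_k A_k is positive semidefinite. Then x* is a global minimizer of the QCQP, i.e. J(x*) ≤ J(x) for every feasible x. -/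
open Matrix

/-!
Condition (i) says that `xstar` is a critical point of the Lagrangian
`L x = J x + ∑ k, γ k * f k x`, which is itself a quadratic function, and (iii) says that its
quadratic part is positive semidefinite. Expanding `L` around `xstar` then shows that `xstar`
minimizes `L` over the whole space. Complementary slackness gives `J xstar = L xstar`, while
`L x ≤ J x` at every feasible `x`.
-/

/-- The quadratic function `x ↦ xᵀ A x + 2 bᵀ x + c` on vectors, the common form of the objective,
the constraints and the Lagrangian of a QCQP. -/
def quadFun {ι R : Type*} [Fintype ι] [CommRing R] (A : Matrix ι ι R) (b : ι → R) (c : R)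
    (x : ι → R) : R :=
  x ⬝ᵥ A *ᵥ x + 2 * (b ⬝ᵥ x) + c

section Algebra

variable {ι R : Type*} [Fintype ι] [CommRing R]

lemma quadFun_add (A B : Matrix ι ι R) (a b : ι → R) (c d : R) (x : ι → R) :
    quadFun (A + B) (a + b) (c + d) x = quadFun A a c x + quadFun B b d x := by
  simp only [quadFun, add_mulVec, dotProduct_add, add_dotProduct]
  ring

lemma quadFun_sum_smul {κ : Type*} [Fintype κ] (γ : κ → R) (A : κ → Matrix ι ι R)
    (b : κ → ι → R) (c : κ → R) (x : ι → R) :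
    quadFun (∑ k, γ k • A k) (∑ k, γ k • b k) (∑ k, γ k * c k) x =
      ∑ k, γ k * quadFun (A k) (b k) (c k) x := by
  simp only [quadFun, sum_mulVec, dotProduct_sum, sum_dotProduct, smul_mulVec, dotProduct_smul,
    smul_dotProduct, smul_eq_mul, Finset.mul_sum, ← Finset.sum_add_distrib]
  exact Finset.sum_congr rfl fun k _ ↦ by ring

lemma quadFun_apply_add_of_isSymm {A : Matrix ι ι R} (hA : A.IsSymm) (b : ι → R) (c : R)
    (x v : ι → R) :
    quadFun A b c (x + v) = quadFun A b c x + 2 * ((A *ᵥ x + b) ⬝ᵥ v) + v ⬝ᵥ A *ᵥ v := by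
  have hcomm : x ⬝ᵥ A *ᵥ v = v ⬝ᵥ A *ᵥ x := by
    simpa only [hA.eq] using dotProduct_transpose_mulVec A x v
  simp only [quadFun, mulVec_add, dotProduct_add, add_dotProduct]
  rw [hcomm, dotProduct_comm (A *ᵥ x) v]
  ring

end Algebra

section Order

variable {ι κ R : Type*} [Fintype ι] [Fintype κ] [CommRing R] [PartialOrder R] [IsOrderedRing R]

lemma quadFun_le_of_posSemidef_of_mulVec_add_eq_zero [StarRing R] [TrivialStar R]
    {A : Matrix ι ι R} {b x : ι → R} (hA : A.PosSemidef) (hx : A *ᵥ x + b = 0) (c : R)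
    (y : ι → R) : quadFun A b c x ≤ quadFun A b c y := by
  have hsymm : A.IsSymm := isHermitian_iff_isSymm.mp hA.isHermitian
  have hnonneg : 0 ≤ (y - x) ⬝ᵥ A *ᵥ (y - x) := by
    simpa only [star_trivial] using hA.dotProduct_mulVec_nonneg (y - x)
  calc
    quadFun A b c x ≤ quadFun A b c x + (y - x) ⬝ᵥ A *ᵥ (y - x) := le_add_of_nonneg_right hnonneg
    _ = quadFun A b c (x + (y - x)) := by
      rw [quadFun_apply_add_of_isSymm hsymm, hx, zero_dotProduct, mul_zero, add_zero]
    _ = quadFun A b c y := by rw [add_sub_cancel]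

lemma le_of_lagrangian_le {X : Type*} {J : X → R} {f : κ → X → R} {γ : κ → R} {x y : X}
    (hγ : ∀ k, 0 ≤ γ k) (hcomp : ∀ k, γ k * f k x = 0) (hy : ∀ k, f k y ≤ 0)
    (hle : J x + ∑ k, γ k * f k x ≤ J y + ∑ k, γ k * f k y) : J x ≤ J y := by
  have hpenalty : ∑ k, γ k * f k y ≤ 0 :=
    Finset.sum_nonpos fun k _ ↦ mul_nonpos_of_nonneg_of_nonpos (hγ k) (hy k)
  calc
    J x = J x + ∑ k, γ k * f k x := by simp only [hcomp, Finset.sum_const_zero, add_zero]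
    _ ≤ J y + ∑ k, γ k * f k y := hle
    _ ≤ J y := add_le_of_nonpos_right hpenalty

theorem stmt_4_general [StarRing R] [TrivialStar R] {AJ : Matrix ι ι R} {A : κ → Matrix ι ι R}
    {bJ : ι → R} {b : κ → ι → R} (cJ : R) (c : κ → R) {xstar : ι → R} {γ : κ → R}
    (hγ : ∀ k, 0 ≤ γ k)
    (hstat : (AJ + ∑ k, γ k • A k) *ᵥ xstar + (bJ + ∑ k, γ k • b k) = 0)
    (hcomp : ∀ k, γ k * quadFun (A k) (b k) (c k) xstar = 0)
    (hpsd : (AJ + ∑ k, γ k • A k).PosSemidef)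
    (x : ι → R) (hx : ∀ k, quadFun (A k) (b k) (c k) x ≤ 0) :
    quadFun AJ bJ cJ xstar ≤ quadFun AJ bJ cJ x := by
  refine le_of_lagrangian_le hγ hcomp hx ?_
  simpa only [quadFun_add, quadFun_sum_smul] using
    quadFun_le_of_posSemidef_of_mulVec_add_eq_zero hpsd hstat (cJ + ∑ k, γ k * c k) x

end Order

/-- Sufficiency of the KKT conditions for global optimality in a general QCQP. -/
theorem stmt_4 (n m : ℕ)
    (AJ : Matrix (Fin n) (Fin n) ℝ) (A : Fin m → Matrix (Fin n) (Fin n) ℝ)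
    (hAJ : AJ.IsSymm) (hA : ∀ k, (A k).IsSymm)
    (bJ : Fin n → ℝ) (b : Fin m → Fin n → ℝ) (cJ : ℝ) (c : Fin m → ℝ)
    (J : (Fin n → ℝ) → ℝ) (f : Fin m → (Fin n → ℝ) → ℝ)
    (hJ : ∀ x, J x = x ⬝ᵥ AJ.mulVec x + 2 * (bJ ⬝ᵥ x) + cJ)
    (hf : ∀ k x, f k x = x ⬝ᵥ (A k).mulVec x + 2 * (b k ⬝ᵥ x) + c k)
    (xstar : Fin n → ℝ)
    (hfeas : ∀ k, f k xstar ≤ 0)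
    (γ : Fin m → ℝ) (hγ : ∀ k, 0 ≤ γ k)
    (hstat : (AJ + ∑ k, γ k • A k).mulVec xstar + (bJ + ∑ k, γ k • b k) = 0)
    (hcomp : ∀ k, γ k * f k xstar = 0)
    (hpsd : (AJ + ∑ k, γ k • A k).PosSemidef) :
    ∀ x : Fin n → ℝ, (∀ k, f k x ≤ 0) → J xstar ≤ J x := by
  obtain rfl : J = quadFun AJ bJ cJ := funext hJ
  obtain rfl : f = fun k ↦ quadFun (A k) (b k) (c k) := funext₂ hf
  exact stmt_4_general cJ c hγ hstat hcomp hpsd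
end

section
/- Let a_0, …, a_m ∈ ℝ, b_0, …, b_m ∈ ℝⁿ, c_0, …, c_m ∈ ℝ and define f_k(x) := a_k‖x‖² + 2 b_kᵀ x + c_k for k = 0, …, m. If m + 1 < n, then the set Ω₀ := {(f_0(x), …, f_m(x)) : x ∈ ℝⁿ} + int ℝ₊^{m+1} is convex. -/
open Matrix

/-!
The map `f` is an affine function of `(x, ‖x‖²)`, so its range is, up to a translation, the image of
the paraboloid `{(x, ‖x‖²)}` under a linear map `L`. By a dimension count `L` kills some nonzero
vector `(u, τ)`. From every point on or above the paraboloid one can move along this direction,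
which is vertical if `u = 0`, to reach the paraboloid without changing the value of `L`. Hence the
range of `f` is a translate of the linear image of the epigraph of `‖·‖²`, which is convex.
-/

open scoped InnerProductSpace Pointwise

theorem convex_epigraph_norm_sq {E : Type*} [SeminormedAddCommGroup E] [NormedSpace ℝ E] :
    Convex ℝ {p : E × ℝ | ‖p.1‖ ^ 2 ≤ p.2} := by
  simpa using ((convexOn_univ_norm (E := E)).pow (fun _ _ ↦ norm_nonneg _) 2).convex_epigraph

section ParaboloidImage

variable {E F : Type*} [NormedAddCommGroup E] [InnerProductSpace ℝ E] [AddCommGroup F] [Module ℝ F]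

theorem exists_norm_add_smul_sq_eq {u : E} (hu : u ≠ 0) (τ : ℝ) {z : E} {q : ℝ}
    (hzq : ‖z‖ ^ 2 ≤ q) : ∃ r : ℝ, ‖z + r • u‖ ^ 2 = q + r * τ := by
  have hu_sq : 0 < ‖u‖ ^ 2 := by positivity
  obtain ⟨r, hr⟩ : ∃ r : ℝ,
      ‖u‖ ^ 2 * (r * r) + (2 * ⟪z, u⟫_ℝ - τ) * r + (‖z‖ ^ 2 - q) = 0 := by
    refine exists_quadratic_eq_zero hu_sq.ne' ⟨√(discrim _ _ _), (Real.mul_self_sqrt ?_).symm⟩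
    have hprod : ‖u‖ ^ 2 * (‖z‖ ^ 2 - q) ≤ 0 :=
      mul_nonpos_of_nonneg_of_nonpos hu_sq.le (sub_nonpos.2 hzq)
    rw [discrim]
    linarith [sq_nonneg (2 * ⟪z, u⟫_ℝ - τ)]
  refine ⟨r, ?_⟩
  rw [norm_add_sq_real, norm_smul, mul_pow, Real.norm_eq_abs, sq_abs, real_inner_smul_right]
  linarith

theorem exists_map_paraboloid_eq {L : E × ℝ →ₗ[ℝ] F} (hL : ¬ Function.Injective L) {z : E} {q : ℝ}
    (hzq : ‖z‖ ^ 2 ≤ q) : ∃ x : E, L (x, ‖x‖ ^ 2) = L (z, q) := by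
  obtain ⟨⟨u, τ⟩, hker, hne⟩ : ∃ p : E × ℝ, L p = 0 ∧ p ≠ 0 := by
    simpa [injective_iff_map_eq_zero] using hL
  have map_add_smul (r : ℝ) : L (z + r • u, q + r * τ) = L (z, q) := by
    have hadd := L.map_add (z, q) (r • (u, τ))
    rwa [L.map_smul, hker, smul_zero, add_zero] at hadd
  by_cases hu : u = 0
  · have hτ : τ ≠ 0 := fun hτ ↦ hne (by simp [hu, hτ])
    have hvert := map_add_smul ((‖z‖ ^ 2 - q) / τ)
    rw [hu, smul_zero, add_zero, div_mul_cancel₀ _ hτ, add_sub_cancel] at hvert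
    exact ⟨z, hvert⟩
  · obtain ⟨r, hr⟩ := exists_norm_add_smul_sq_eq hu τ hzq
    exact ⟨z + r • u, by rw [hr, map_add_smul]⟩

theorem convex_range_map_paraboloid {L : E × ℝ →ₗ[ℝ] F} (hL : ¬ Function.Injective L) :
    Convex ℝ (Set.range fun x : E ↦ L (x, ‖x‖ ^ 2)) := by
  have range_eq : (Set.range fun x : E ↦ L (x, ‖x‖ ^ 2)) = L '' {p : E × ℝ | ‖p.1‖ ^ 2 ≤ p.2} := by
    apply Set.Subset.antisymm
    · rintro _ ⟨x, rfl⟩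
      exact ⟨(x, ‖x‖ ^ 2), le_refl (‖x‖ ^ 2), rfl⟩
    · rintro _ ⟨⟨z, q⟩, hzq, rfl⟩
      exact exists_map_paraboloid_eq hL hzq
  rw [range_eq]
  exact convex_epigraph_norm_sq.linear_image L

end ParaboloidImage

theorem not_injective_of_card_lt_rank {R M ι : Type*} [Ring R] [StrongRankCondition R]
    [AddCommGroup M] [Module R M] [Fintype ι] (h : Fintype.card ι < Module.rank R M)
    (L : M →ₗ[R] ι → R) : ¬ Function.Injective L := by
  intro hL
  have hle := L.lift_rank_le_of_injective hL
  rw [rank_fun', Cardinal.lift_natCast, Cardinal.lift_le_nat_iff] at hle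
  exact h.not_ge hle

theorem convex_setOf_exists_forall_lt {𝕜 X ι : Type*} [Ring 𝕜] [LinearOrder 𝕜]
    [IsStrictOrderedRing 𝕜] {g : X → ι → 𝕜}
    (hg : Convex 𝕜 (Set.range g)) : Convex 𝕜 {v : ι → 𝕜 | ∃ x, ∀ k, g x k < v k} := by
  have eq_add : {v : ι → 𝕜 | ∃ x, ∀ k, g x k < v k} =
      Set.range g + Set.univ.pi fun _ ↦ Set.Ioi (0 : 𝕜) := by
    ext v
    constructor
    · rintro ⟨x, hx⟩
      exact ⟨g x, ⟨x, rfl⟩, v - g x, fun k _ ↦ sub_pos.2 (hx k), add_sub_cancel _ _⟩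
    · rintro ⟨_, ⟨x, rfl⟩, w, hw, rfl⟩
      exact ⟨x, fun k ↦ lt_add_of_pos_right _ (hw k trivial)⟩
  rw [eq_add]
  exact hg.add (convex_pi fun _ _ ↦ convex_Ioi 0)

section SphericalQuadratic

variable {E ι : Type*} [NormedAddCommGroup E] [InnerProductSpace ℝ E] [Fintype ι]

theorem convex_range_spherical_quadratic (h : Fintype.card ι ≤ Module.rank ℝ E)
    (a : ι → ℝ) (b : ι → E) (c : ι → ℝ) :
    Convex ℝ (Set.range fun (x : E) k ↦ a k * ‖x‖ ^ 2 + 2 * ⟪b k, x⟫_ℝ + c k) := by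
  let L : E × ℝ →ₗ[ℝ] ι → ℝ :=
    LinearMap.pi fun k ↦ ((2 : ℝ) • innerₛₗ ℝ (b k)).coprod (a k • LinearMap.id)
  have card_lt : Fintype.card ι < Module.rank ℝ (E × ℝ) := by
    rw [← Cardinal.natCast_add_one_le_iff, rank_prod, Module.rank_self, Cardinal.lift_one,
      Cardinal.lift_id']
    gcongr
  have hL : ¬ Function.Injective L := not_injective_of_card_lt_rank card_lt L
  have range_eq : (Set.range fun (x : E) k ↦ a k * ‖x‖ ^ 2 + 2 * ⟪b k, x⟫_ℝ + c k) =
      (c + ·) '' Set.range fun x : E ↦ L (x, ‖x‖ ^ 2) := by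
    rw [← Set.range_comp]
    congr! 3 with x k
    simp only [Function.comp_apply, Pi.add_apply, LinearMap.pi_apply, LinearMap.coprod_apply,
      LinearMap.smul_apply, innerₛₗ_apply_apply, smul_eq_mul, LinearMap.id_coe, id_eq, L]
    ring
  rw [range_eq]
  exact (convex_range_map_paraboloid hL).translate c

theorem stmt_5_general (h : Fintype.card ι ≤ Module.rank ℝ E)
    (a : ι → ℝ) (b : ι → E) (c : ι → ℝ) :
    Convex ℝ {v : ι → ℝ | ∃ x : E, ∀ k, a k * ‖x‖ ^ 2 + 2 * ⟪b k, x⟫_ℝ + c k < v k} :=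
  convex_setOf_exists_forall_lt (convex_range_spherical_quadratic h a b c)

end SphericalQuadratic

/-- For S-QCQP-type quadratic functionals `f k x = a k * ‖x‖² + 2 bₖᵀx + c k`
with `m + 1 < n`, the set Ω₀ is convex. -/
theorem stmt_5 (n m : ℕ) (hmn : m + 1 < n)
    (a : Fin (m + 1) → ℝ) (b : Fin (m + 1) → Fin n → ℝ) (c : Fin (m + 1) → ℝ)
    (f : Fin (m + 1) → (Fin n → ℝ) → ℝ)
    (hf : ∀ k x, f k x = a k * (x ⬝ᵥ x) + 2 * (b k ⬝ᵥ x) + c k) :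
    Convex ℝ {v : Fin (m + 1) → ℝ | ∃ x : Fin n → ℝ, ∀ k, f k x < v k} := by
  have card_le_rank : Fintype.card (Fin (m + 1)) ≤ Module.rank ℝ (EuclideanSpace ℝ (Fin n)) := by
    simpa [← Module.finrank_eq_rank] using mod_cast hmn.le
  simpa only [hf, (WithLp.toLp_surjective 2).exists, ← real_inner_self_eq_norm_sq,
    EuclideanSpace.inner_toLp_toLp, star_trivial, dotProduct_comm _ (b _)] using
    stmt_5_general card_le_rank a (fun k ↦ WithLp.toLp 2 (b k)) c
end

section
/- Consider a diagonal QCQP, i.e. A_k = diag(α_k) with α_k ∈ ℝⁿ for k ∈ {J, 1, …, m}. Define the SDP relaxation: over pairs (x, X) ∈ ℝⁿ × Sym(n), minimize Tr(A_J X) + 2 b_Jᵀ x subject to Tr(A_k X) + 2 b_kᵀ x + c_k ≤ 0 for k = 1, …, m and X − x xᵀ positive semidefinite. Define the relaxation SDP2: over pairs (x, y) ∈ ℝⁿ × ℝⁿ, minimize α_Jᵀ y + 2 b_Jᵀ x subject to α_kᵀ y + 2 b_kᵀ x + c_k ≤ 0 for k = 1, …, m and x_i² ≤ y_i for i = 1,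 …, n. Then the set of objective values attained over the SDP feasible set equals the set of objective values attained over the SDP2 feasible set; in particular the optimal values (infima) of SDP and SDP2 coincide. -/
open Matrix

/-!
The relaxation SDP sees `X` only through its diagonal, because `Tr (diag a * X) = aᵀ diag X`.
For fixed `x`, the diagonals of symmetric `X ⪰ x xᵀ` are exactly the vectors `y` with
`x i ^ 2 ≤ y i`: a positive semidefinite matrix has nonnegative diagonal, and conversely
`X = diag (y - x²) + x xᵀ` realises every such `y`.
-/

lemma trace_diagonal_mul_eq_dotProduct_diag {ι R : Type*} [Fintype ι] [DecidableEq ι]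
    [NonUnitalNonAssocSemiring R] (a : ι → R) (X : Matrix ι ι R) :
    (diagonal a * X).trace = a ⬝ᵥ X.diag := by
  simp only [trace, diag_apply, diagonal_mul, dotProduct]

section DiagonalOfLoewnerUpperBound

variable {ι R : Type*} [Ring R] [PartialOrder R] [StarRing R] [StarOrderedRing R]

lemma diag_le_diag_of_posSemidef_sub {M X : Matrix ι ι R} (hX : (X - M).PosSemidef) :
    M.diag ≤ X.diag :=
  fun _ => sub_nonneg.mp hX.diag_nonneg

lemma exists_isSymm_posSemidef_sub_diag_eq {M : Matrix ι ι R} (hM : M.IsSymm) {y : ι → R}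
    (hy : M.diag ≤ y) : ∃ X : Matrix ι ι R, X.IsSymm ∧ (X - M).PosSemidef ∧ X.diag = y := by
  classical
  refine ⟨diagonal (y - M.diag) + M, (isSymm_diagonal _).add hM, ?_, ?_⟩
  · rw [add_sub_cancel_right]
    exact .diagonal (sub_nonneg.mpr hy)
  · rw [diag_add, diag_diagonal, sub_add_cancel]

lemma exists_isSymm_posSemidef_sub_diag_eq_iff {M : Matrix ι ι R} (hM : M.IsSymm) {y : ι → R} :
    (∃ X : Matrix ι ι R, X.IsSymm ∧ (X - M).PosSemidef ∧ X.diag = y) ↔ M.diag ≤ y :=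
  ⟨fun ⟨_, _, hX, hXy⟩ => hXy ▸ diag_le_diag_of_posSemidef_sub hX,
    exists_isSymm_posSemidef_sub_diag_eq hM⟩

end DiagonalOfLoewnerUpperBound

lemma isSymm_vecMulVec_self {ι R : Type*} [CommMagma R] (x : ι → R) : (vecMulVec x x).IsSymm :=
  transpose_vecMulVec x x

lemma diag_vecMulVec_self_le_iff {ι R : Type*} [Monoid R] [LE R] {x y : ι → R} :
    (vecMulVec x x).diag ≤ y ↔ ∀ i, x i ^ 2 ≤ y i := by
  simp only [diag_vecMulVec, ← sq, Pi.le_def, Pi.pow_apply]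

theorem stmt_7_general {ι κ R : Type*} [Fintype ι] [DecidableEq ι]
    [CommRing R] [PartialOrder R] [StarRing R] [StarOrderedRing R]
    (αJ : ι → R) (α : κ → ι → R) (bJ : ι → R) (b : κ → ι → R) (c : κ → R) :
    {t : R | ∃ (x : ι → R) (X : Matrix ι ι R), X.IsSymm ∧
        (∀ k, (diagonal (α k) * X).trace + 2 * (b k ⬝ᵥ x) + c k ≤ 0) ∧
        (X - vecMulVec x x).PosSemidef ∧
        t = (diagonal αJ * X).trace + 2 * (bJ ⬝ᵥ x)}
      = {t : R | ∃ x y : ι → R,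
        (∀ k, α k ⬝ᵥ y + 2 * (b k ⬝ᵥ x) + c k ≤ 0) ∧
        (∀ i, x i ^ 2 ≤ y i) ∧
        t = αJ ⬝ᵥ y + 2 * (bJ ⬝ᵥ x)} := by
  ext t
  simp only [Set.mem_ofPred_eq, trace_diagonal_mul_eq_dotProduct_diag,
    ← diag_vecMulVec_self_le_iff,
    ← exists_isSymm_posSemidef_sub_diag_eq_iff (isSymm_vecMulVec_self _)]
  constructor
  · rintro ⟨x, X, hsymm, hfeas, hpsd, ht⟩
    exact ⟨x, X.diag, hfeas, ⟨X, hsymm, hpsd, rfl⟩, ht⟩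
  · rintro ⟨x, _, hfeas, ⟨X, hsymm, hpsd, rfl⟩, ht⟩
    exact ⟨x, X, hsymm, hfeas, hpsd, ht⟩

/-- For a diagonal QCQP (`A_k = diag(α_k)`), the set of objective values attained
over the feasible set of the Shor SDP relaxation equals the set of objective values
attained over the feasible set of the relaxation SDP2; in particular the two
optimal values (infima) coincide. -/
theorem stmt_7 (n m : ℕ)
    (αJ : Fin n → ℝ) (α : Fin m → Fin n → ℝ)
    (bJ : Fin n → ℝ) (b : Fin m → Fin n → ℝ) (cJ : ℝ) (c : Fin m → ℝ) :
    ({t : ℝ | ∃ (x : Fin n → ℝ) (X : Matrix (Fin n) (Fin n) ℝ), X.IsSymm ∧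
        (∀ k, (Matrix.diagonal (α k) * X).trace + 2 * (b k ⬝ᵥ x) + c k ≤ 0) ∧
        (X - Matrix.vecMulVec x x).PosSemidef ∧
        t = (Matrix.diagonal αJ * X).trace + 2 * (bJ ⬝ᵥ x)}
      = {t : ℝ | ∃ x y : Fin n → ℝ,
        (∀ k, α k ⬝ᵥ y + 2 * (b k ⬝ᵥ x) + c k ≤ 0) ∧
        (∀ i, (x i) ^ 2 ≤ y i) ∧
        t = αJ ⬝ᵥ y + 2 * (bJ ⬝ᵥ x)}) ∧
    sInf {t : ℝ | ∃ (x : Fin n → ℝ) (X : Matrix (Fin n) (Fin n) ℝ), X.IsSymm ∧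
        (∀ k, (Matrix.diagonal (α k) * X).trace + 2 * (b k ⬝ᵥ x) + c k ≤ 0) ∧
        (X - Matrix.vecMulVec x x).PosSemidef ∧
        t = (Matrix.diagonal αJ * X).trace + 2 * (bJ ⬝ᵥ x)}
      = sInf {t : ℝ | ∃ x y : Fin n → ℝ,
        (∀ k, α k ⬝ᵥ y + 2 * (b k ⬝ᵥ x) + c k ≤ 0) ∧
        (∀ i, (x i) ^ 2 ≤ y i) ∧
        t = αJ ⬝ᵥ y + 2 * (bJ ⬝ᵥ x)} := by
  have hvalues := stmt_7_general αJ α bJ b c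
  exact ⟨hvalues, congrArg sInf hvalues⟩
end

section
/- Consider problem (P1) with two constraints, n > 3, the zero vector not feasible, a_1 ≠ 0, and b_1, b_2 linearly independent. Let γ_1 > 0, γ_2 > 0, set w := 1 + 2γ_1 a_1 + 2γ_2 a_2, s := γ_1 b_1 + γ_2 b_2, and x* := −(1/w)·s. Suppose w > 0 and that (γ_1, γ_2) solves the system: (1) (1/w²)‖s‖² = (1/(a_1 w)) b_1ᵀ s − c_1/a_1; and (2) if a_2 ≠ 0 then (1/(a_1 w)) b_1ᵀ s − c_1/a_1 = (1/(a_2 w)) b_2ᵀ s − c_2/a_2, while if a_2 = 0 then (1/w) b_2ᵀ s = c_2. Then x* is a global minimizer of (P1). -/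
open Matrix

/-!
Write `q_k` for the constraints and `x₀ = -(1/w) s`. The Lagrangian `½‖x‖² + ∑ γ_k q_k(x)` has the
same shape as the constraints: its quadratic part is `(w/2)‖x‖²` and its linear part is `sᵀx`. As
`w > 0`, completing the square shows that it is minimized at `x₀`, and the system says that both
constraints vanish at `x₀`. Weak duality then makes `x₀` a minimizer of the constrained problem.
-/

open LinearMap (BilinForm)

theorem isMinOn_of_isMinOn_lagrangian {X K κ : Type*} [CommRing K] [PartialOrder K]
    [IsOrderedRing K] [Fintype κ] {f : X → K} {g : κ → X → K} {γ : κ → K} {x₀ : X}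
    (hγ : ∀ k, 0 ≤ γ k) (hslack : ∀ k, γ k * g k x₀ = 0)
    (hmin : IsMinOn (fun x => f x + ∑ k, γ k * g k x) Set.univ x₀) :
    IsMinOn f {x | ∀ k, g k x ≤ 0} x₀ := by
  refine isMinOn_iff.2 fun x hx => ?_
  calc
    f x₀ = f x₀ + ∑ k, γ k * g k x₀ := by simp [hslack]
    _ ≤ f x + ∑ k, γ k * g k x := isMinOn_univ_iff.1 hmin x
    _ ≤ f x := add_le_of_nonpos_right <|
      Finset.sum_nonpos fun k _ => mul_nonpos_of_nonneg_of_nonpos (hγ k) (hx k)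

/-- The quadratic function `x ↦ a‖x‖² + bᵀx + c` whose Hessian is a multiple of the identity, with
an arbitrary bilinear form `B` in the role of the inner product. The constraints of (P1) and its
Lagrangian are of this kind. -/
def isotropicQuadratic {K V : Type*} [CommRing K] [AddCommGroup V] [Module K V]
    (B : BilinForm K V) (a : K) (b : V) (c : K) (x : V) : K :=
  a * B x x + B b x + c

section CommRing

variable {K V : Type*} [CommRing K] [AddCommGroup V] [Module K V] {B : BilinForm K V}

theorem mul_self_add_sum_isotropicQuadratic {κ : Type*} [Fintype κ] (a₀ : K) (γ a : κ → K)
    (b : κ → V) (c : κ → K) (x : V) :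
    a₀ * B x x + ∑ k, γ k * isotropicQuadratic B (a k) (b k) (c k) x =
      isotropicQuadratic B (a₀ + ∑ k, γ k * a k) (∑ k, γ k • b k) (∑ k, γ k * c k) x := by
  simp only [isotropicQuadratic, map_sum, map_smul, LinearMap.sum_apply, LinearMap.smul_apply,
    smul_eq_mul, mul_add, add_mul, Finset.sum_add_distrib, Finset.sum_mul, mul_assoc, add_assoc]

theorem isotropicQuadratic_eq_add_sq_of_stationary (hB : B.IsSymm) {a : K} {b x₀ : V}
    (hstat : (2 * a) • x₀ + b = 0) (c : K) (x : V) :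
    isotropicQuadratic B a b c x =
      isotropicQuadratic B a b c x₀ + a * B (x - x₀) (x - x₀) := by
  obtain rfl : b = -((2 * a) • x₀) := eq_neg_of_add_eq_zero_right hstat
  simp only [isotropicQuadratic, map_neg, map_smul, map_sub, LinearMap.neg_apply,
    LinearMap.smul_apply, LinearMap.sub_apply, smul_eq_mul, hB.eq x x₀]
  ring

theorem isMinOn_isotropicQuadratic_of_stationary [PartialOrder K] [IsOrderedRing K]
    (hB : B.IsPosSemidef) {a : K} (ha : 0 ≤ a) {b x₀ : V} (hstat : (2 * a) • x₀ + b = 0) (c : K) :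
    IsMinOn (isotropicQuadratic B a b c) Set.univ x₀ := by
  refine isMinOn_univ_iff.2 fun x => ?_
  rw [isotropicQuadratic_eq_add_sq_of_stationary hB.isSymm hstat c x]
  exact le_add_of_nonneg_right (mul_nonneg ha (hB.nonneg _))

end CommRing

section Field

variable {K V : Type*} [Field K] [AddCommGroup V] [Module K V] {B : BilinForm K V}

theorem isotropicQuadratic_neg_one_div_smul (a : K) (b : V) (c w : K) (s : V) :
    isotropicQuadratic B a b c (-((1 / w) • s)) =
      a * (1 / w ^ 2 * B s s) - 1 / w * B b s + c := by
  simp only [isotropicQuadratic, map_neg, map_smul, LinearMap.neg_apply, LinearMap.smul_apply,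
    smul_eq_mul]
  ring

theorem isotropicQuadratic_neg_one_div_smul_eq_zero_iff {a : K} (ha : a ≠ 0) (b : V) (c w : K)
    (s : V) :
    isotropicQuadratic B a b c (-((1 / w) • s)) = 0 ↔
      1 / w ^ 2 * B s s = 1 / (a * w) * B b s - c / a := by
  have hscale : a * (1 / (a * w) * B b s - c / a) = 1 / w * B b s - c := by
    rw [mul_sub, mul_div_cancel₀ c ha, one_div_mul_eq_div, one_div_mul_eq_div,
      ← mul_div_assoc, mul_div_mul_left _ _ ha]
  rw [isotropicQuadratic_neg_one_div_smul, sub_add, sub_eq_zero, ← hscale, mul_right_inj' ha]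

variable [LinearOrder K] [IsStrictOrderedRing K]

theorem isMinOn_half_sq_of_kkt (hB : B.IsPosSemidef) {κ : Type*} [Fintype κ] {γ a c : κ → K}
    {b : κ → V} {x₀ : V} (hγ : ∀ k, 0 ≤ γ k) (hw : 0 ≤ 1 + 2 * ∑ k, γ k * a k)
    (hstat : (1 + 2 * ∑ k, γ k * a k) • x₀ + ∑ k, γ k • b k = 0)
    (hslack : ∀ k, γ k * isotropicQuadratic B (a k) (b k) (c k) x₀ = 0) :
    IsMinOn (fun x => 1 / 2 * B x x)
      {x | ∀ k, isotropicQuadratic B (a k) (b k) (c k) x ≤ 0} x₀ := by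
  refine isMinOn_of_isMinOn_lagrangian hγ hslack ?_
  simp only [mul_self_add_sum_isotropicQuadratic]
  have hdouble : 2 * (1 / 2 + ∑ k, γ k * a k) = 1 + 2 * ∑ k, γ k * a k := by ring
  exact isMinOn_isotropicQuadratic_of_stationary hB (by linarith) (by rwa [hdouble]) _

theorem stmt_13_general (hB : B.IsPosSemidef) {a1 a2 : K} (b1 b2 : V) (c1 c2 : K) (ha1 : a1 ≠ 0)
    {γ1 γ2 : K} (hγ1 : 0 ≤ γ1) (hγ2 : 0 ≤ γ2)
    {w : K} (hw : w = 1 + 2 * γ1 * a1 + 2 * γ2 * a2) (hwpos : 0 < w)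
    {s : V} (hs : s = γ1 • b1 + γ2 • b2) {xstar : V} (hx : xstar = -((1 / w) • s))
    (heq1 : 1 / w ^ 2 * B s s = 1 / (a1 * w) * B b1 s - c1 / a1)
    (heq2 : (a2 ≠ 0 →
        1 / (a1 * w) * B b1 s - c1 / a1 = 1 / (a2 * w) * B b2 s - c2 / a2) ∧
      (a2 = 0 → 1 / w * B b2 s = c2)) :
    isotropicQuadratic B a1 b1 c1 xstar = 0 ∧ isotropicQuadratic B a2 b2 c2 xstar = 0 ∧
      ∀ x, isotropicQuadratic B a1 b1 c1 x ≤ 0 → isotropicQuadratic B a2 b2 c2 x ≤ 0 →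
        1 / 2 * B xstar xstar ≤ 1 / 2 * B x x := by
  have hactive1 : isotropicQuadratic B a1 b1 c1 xstar = 0 :=
    hx ▸ (isotropicQuadratic_neg_one_div_smul_eq_zero_iff ha1 b1 c1 w s).2 heq1
  have hactive2 : isotropicQuadratic B a2 b2 c2 xstar = 0 := by
    rw [hx]
    by_cases ha2 : a2 = 0
    · rw [isotropicQuadratic_neg_one_div_smul, heq2.2 ha2, ha2]
      ring
    · exact (isotropicQuadratic_neg_one_div_smul_eq_zero_iff ha2 b2 c2 w s).2
        (heq1.trans (heq2.1 ha2))
  have hstat : w • xstar + s = 0 := by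
    rw [hx, smul_neg, smul_smul, mul_one_div_cancel hwpos.ne', one_smul, neg_add_cancel]
  have hweight : 1 + 2 * ∑ k, ![γ1, γ2] k * ![a1, a2] k = w := by
    simp only [Fin.sum_univ_two, cons_val_zero, cons_val_one, hw]
    ring
  have hmin := isMinOn_half_sq_of_kkt hB (γ := ![γ1, γ2]) (a := ![a1, a2]) (b := ![b1, b2])
    (c := ![c1, c2]) (x₀ := xstar) (by simp [Fin.forall_fin_two, hγ1, hγ2])
    (hweight ▸ hwpos.le) (by rw [hweight]; simpa [hs] using hstat)
    (by simp [Fin.forall_fin_two, hactive1, hactive2])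
  exact ⟨hactive1, hactive2, fun x hx1 hx2 =>
    isMinOn_iff.1 hmin x (by simp [Fin.forall_fin_two, hx1, hx2])⟩

end Field

theorem dotProductBilin_isPosSemidef {ι K : Type*} [Fintype ι] [CommRing K] [LinearOrder K]
    [IsOrderedRing K] :
    BilinForm.IsPosSemidef (dotProductBilin K K : BilinForm K (ι → K)) where
  eq := dotProduct_comm
  nonneg x := Finset.sum_nonneg fun i _ => mul_self_nonneg (x i)

/-- Problem (P1), both constraints active: with `n > 3`, zero infeasible, `a₁ ≠ 0`,
`b₁, b₂` linearly independent, `γ₁, γ₂ > 0`, `w := 1 + 2γ₁a₁ + 2γ₂a₂ > 0`,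
`s := γ₁b₁ + γ₂b₂` and `x* := −(1/w)·s`, if `(γ₁, γ₂)` solves the system (1)–(2)
then `x*` is a global minimizer of (P1). -/
theorem stmt_13 (n : ℕ) (hn : 3 < n) (a1 a2 : ℝ) (b1 b2 : Fin n → ℝ) (c1 c2 : ℝ)
    (g1 g2 : (Fin n → ℝ) → ℝ)
    (hg1 : ∀ x, g1 x = a1 * (x ⬝ᵥ x) + b1 ⬝ᵥ x + c1)
    (hg2 : ∀ x, g2 x = a2 * (x ⬝ᵥ x) + b2 ⬝ᵥ x + c2)
    (hzero : 0 < g1 0 ∨ 0 < g2 0)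
    (ha1 : a1 ≠ 0)
    (hind : LinearIndependent ℝ ![b1, b2])
    (γ1 γ2 : ℝ) (hγ1 : 0 < γ1) (hγ2 : 0 < γ2)
    (w : ℝ) (hw : w = 1 + 2 * γ1 * a1 + 2 * γ2 * a2) (hwpos : 0 < w)
    (s : Fin n → ℝ) (hs : s = γ1 • b1 + γ2 • b2)
    (xstar : Fin n → ℝ) (hx : xstar = -((1 / w) • s))
    (heq1 : (1 / w ^ 2) * (s ⬝ᵥ s) = (1 / (a1 * w)) * (b1 ⬝ᵥ s) - c1 / a1)
    (heq2 : (a2 ≠ 0 →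
        (1 / (a1 * w)) * (b1 ⬝ᵥ s) - c1 / a1 = (1 / (a2 * w)) * (b2 ⬝ᵥ s) - c2 / a2) ∧
      (a2 = 0 → (1 / w) * (b2 ⬝ᵥ s) = c2)) :
    g1 xstar ≤ 0 ∧ g2 xstar ≤ 0 ∧
      ∀ x : Fin n → ℝ, g1 x ≤ 0 → g2 x ≤ 0 →
        (1 / 2) * (xstar ⬝ᵥ xstar) ≤ (1 / 2) * (x ⬝ᵥ x) := by
  obtain ⟨h1, h2, hmin⟩ := stmt_13_general (dotProductBilin_isPosSemidef (ι := Fin n)) b1 b2 c1 c2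
    ha1 hγ1.le hγ2.le hw hwpos hs hx heq1 heq2
  obtain rfl := funext hg1
  obtain rfl := funext hg2
  exact ⟨h1.le, h2.le, hmin⟩
end

section
/- Let b_0, …, b_m ∈ ℝⁿ with m + 1 < n, let x_v, x_w ∈ ℝⁿ be distinct, and let λ ∈ (0, 1). Then there exists x̃ ∈ ℝⁿ such that ‖x̃‖² = λ‖x_v‖² + (1 − λ)‖x_w‖² and b_kᵀ x̃ = b_kᵀ(λ x_v + (1 − λ) x_w) for all k = 0, …, m. -/
open Matrix

/-!
Since `‖·‖ ^ 2` is convex, the weighted mean `c` of the two points satisfies `‖c‖ ≤ R`, where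
`R ^ 2` is the weighted mean of the squared norms. Moving away from `c` along a nonzero vector in
the common kernel of the linear constraints preserves the constraints and makes the norm go to
infinity, so by the intermediate value theorem it takes the value `R`.
-/

theorem norm_convexCombination_pow_le {E : Type*} [SeminormedAddCommGroup E] [NormedSpace ℝ E]
    (x y : E) {l : ℝ} (hl : l ∈ Set.Icc (0 : ℝ) 1) (p : ℕ) :
    ‖l • x + (1 - l) • y‖ ^ p ≤ l * ‖x‖ ^ p + (1 - l) * ‖y‖ ^ p :=
  (convexOn_univ_norm.pow (fun x _ ↦ norm_nonneg x) p).2 (Set.mem_univ x) (Set.mem_univ y)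
    hl.1 (sub_nonneg.2 hl.2) (add_sub_cancel l 1)

section NormedSpace

variable {E : Type*} [NormedAddCommGroup E] [NormedSpace ℝ E]

theorem exists_norm_add_smul_eq {d : E} (hd : d ≠ 0) {c : E} {R : ℝ} (hR : ‖c‖ ≤ R) :
    ∃ t : ℝ, ‖c + t • d‖ = R := by
  have hcont : Continuous fun t : ℝ ↦ ‖c + t • d‖ := by fun_prop
  have hR₀ : 0 ≤ R := (norm_nonneg c).trans hR
  refine mem_range_of_exists_le_of_exists_ge hcont ⟨0, by simpa using hR⟩
    ⟨(R + ‖c‖) / ‖d‖, ?_⟩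
  calc R = ‖((R + ‖c‖) / ‖d‖) • d‖ - ‖c‖ := by
        rw [norm_smul, Real.norm_of_nonneg (by positivity),
          div_mul_cancel₀ _ (norm_ne_zero_iff.2 hd), add_sub_cancel_right]
    _ ≤ ‖c + ((R + ‖c‖) / ‖d‖) • d‖ := by
        rw [add_comm c]
        exact norm_sub_le_norm_add _ _

variable {F : Type*} [AddCommGroup F] [Module ℝ F]

theorem exists_norm_eq_and_map_eq {f : E →ₗ[ℝ] F} (hf : LinearMap.ker f ≠ ⊥) {c : E} {R : ℝ}
    (hR : ‖c‖ ≤ R) : ∃ z : E, ‖z‖ = R ∧ f z = f c := by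
  obtain ⟨d, hfd, hd⟩ := (Submodule.ne_bot_iff _).1 hf
  obtain ⟨t, ht⟩ := exists_norm_add_smul_eq hd hR
  exact ⟨c + t • d, ht, by rw [map_add, map_smul, LinearMap.mem_ker.1 hfd, smul_zero, add_zero]⟩

theorem stmt_15_general {f : E →ₗ[ℝ] F} (hf : LinearMap.ker f ≠ ⊥) (x y : E) {l : ℝ}
    (hl : l ∈ Set.Icc (0 : ℝ) 1) :
    ∃ z : E, ‖z‖ ^ 2 = l * ‖x‖ ^ 2 + (1 - l) * ‖y‖ ^ 2 ∧ f z = f (l • x + (1 - l) • y) := by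
  have hle := norm_convexCombination_pow_le x y hl 2
  obtain ⟨z, hz, hfz⟩ := exists_norm_eq_and_map_eq hf (Real.le_sqrt_of_sq_le hle)
  exact ⟨z, by rw [hz, Real.sq_sqrt ((sq_nonneg _).trans hle)], hfz⟩

end NormedSpace

theorem norm_toLp_sq_eq_dotProduct {ι : Type*} [Fintype ι] (x : ι → ℝ) :
    ‖WithLp.toLp 2 x‖ ^ 2 = x ⬝ᵥ x := by
  simp only [EuclideanSpace.real_norm_sq_eq, dotProduct, pow_two (x _)]

theorem ker_toEuclideanLin_ne_bot {𝕜 ι κ : Type*} [RCLike 𝕜] [Fintype ι] [Fintype κ]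
    [DecidableEq κ] (A : Matrix ι κ 𝕜) (h : Fintype.card ι < Fintype.card κ) :
    LinearMap.ker (Matrix.toEuclideanLin A) ≠ ⊥ :=
  LinearMap.ker_ne_bot_of_finrank_lt (by simpa only [finrank_euclideanSpace] using h)

/-- Given `b₀, …, b_m ∈ ℝⁿ` with `m + 1 < n`, distinct `x_v, x_w ∈ ℝⁿ` and
`λ ∈ (0, 1)`, there is `x̃` with `‖x̃‖² = λ‖x_v‖² + (1−λ)‖x_w‖²` and
`b_kᵀ x̃ = b_kᵀ(λ x_v + (1−λ) x_w)` for all `k`. -/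
theorem stmt_15 (n m : ℕ) (hmn : m + 1 < n) (b : Fin (m + 1) → Fin n → ℝ)
    (xv xw : Fin n → ℝ) (hne : xv ≠ xw) (l : ℝ) (hl : l ∈ Set.Ioo (0 : ℝ) 1) :
    ∃ xt : Fin n → ℝ,
      xt ⬝ᵥ xt = l * (xv ⬝ᵥ xv) + (1 - l) * (xw ⬝ᵥ xw) ∧
      ∀ k, b k ⬝ᵥ xt = b k ⬝ᵥ (l • xv + (1 - l) • xw) := by
  obtain ⟨z, hz, hbz⟩ := stmt_15_general (ker_toEuclideanLin_ne_bot (Matrix.of b) (by simpa))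
    (WithLp.toLp 2 xv) (WithLp.toLp 2 xw) (Set.Ioo_subset_Icc_self hl)
  exact ⟨z.ofLp, by simpa only [← norm_toLp_sq_eq_dotProduct] using hz,
    fun k ↦ congrArg (· k) hbz⟩
end

section
/- Consider the S-QCQP problem and its relaxation SDP2. Suppose (x̄, ȳ) ∈ ℝⁿ × ℝⁿ is feasible for SDP2 and there exist multipliers γ_1, …, γ_m ≥ 0 such that, with ν := a_J + Σ_{k=1}^m γ_k a_k: (i) b_{J,i} + Σ_{k=1}^m γ_k b_{k,i} + ν · x̄_i = 0 for every i = 1, …, n; (ii) γ_k (a_k Σ_{i=1}^n ȳ_i + 2 b_kᵀ x̄ + c_k) = 0 for every k = 1, …, m; (iii) ν · (x̄_i² − ȳ_i) = 0 for every i = 1, …, n; and suppose ν > 0. Then ȳ_i = x̄_i² for all i, x̄ is feasible for the S-QCQP, and x̄ is a global minimizer of the S-QCQP; in particular SDP2 is exact. -/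
open Matrix

/-!
Put `s = ∑ yᵢ`. The Lagrangian of SDP2 is affine in `(s, x)` with `s`-coefficient `ν`, and
stationarity lets one complete the square: up to a constant it is
`ν (s - ‖x‖²) + ν ‖x - x̄‖²`. For `ν ≥ 0` this is minimal over `‖x‖² ≤ s` at `(s̄, x̄)`, so
complementary slackness makes `(x̄, ȳ)` optimal for SDP2. For `ν > 0` slackness also forces
`ȳᵢ = x̄ᵢ²`, so the optimum of the relaxation is attained at a point of the S-QCQP itself.
-/

section LiftedForm

variable {R ι κ : Type*} [CommRing R] [Fintype ι]

/-- The linear form in `(s, x)` obtained from the quadratic `a ‖x‖² + 2 bᵀ x` by replacing `‖x‖²`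
with an independent variable `s`. Both the S-QCQP (`s = x ⬝ᵥ x`) and SDP2 (`s = ∑ i, y i`) are
expressed through it. -/
def liftedForm (a : R) (b : ι → R) (s : R) (x : ι → R) : R :=
  a * s + 2 * (b ⬝ᵥ x)

theorem dotProduct_self_eq_sum_sq (x : ι → R) : x ⬝ᵥ x = ∑ i, x i ^ 2 := by
  simp only [dotProduct, sq]

theorem liftedForm_add_sum_mul [Fintype κ] (a₀ : R) (b₀ : ι → R) (a : κ → R) (b : κ → ι → R)
    (c γ : κ → R) (s : R) (x : ι → R) :
    liftedForm a₀ b₀ s x + ∑ k, γ k * (liftedForm (a k) (b k) s x + c k) =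
      liftedForm (a₀ + ∑ k, γ k * a k) (b₀ + ∑ k, γ k • b k) s x + ∑ k, γ k * c k := by
  have scalar_part : (∑ k, γ k * a k) * s = ∑ k, γ k * (a k * s) := by
    simp only [Finset.sum_mul, mul_assoc]
  have vector_part : 2 * ((∑ k, γ k • b k) ⬝ᵥ x) = ∑ k, γ k * (2 * (b k ⬝ᵥ x)) := by
    simp only [sum_dotProduct, smul_dotProduct, smul_eq_mul, Finset.mul_sum, mul_left_comm]
  simp only [liftedForm, add_dotProduct, add_mul, mul_add, Finset.sum_add_distrib, scalar_part,
    vector_part]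
  ring

theorem liftedForm_eq_complete_square {ν : R} {b xbar : ι → R} (hb : b + ν • xbar = 0)
    (s : R) (x : ι → R) :
    liftedForm ν b s x =
      ν * (s - x ⬝ᵥ x) + ν * ((x - xbar) ⬝ᵥ (x - xbar)) - ν * (xbar ⬝ᵥ xbar) := by
  rw [eq_neg_of_add_eq_zero_left hb]
  simp only [liftedForm, neg_dotProduct, smul_dotProduct, smul_eq_mul, sub_dotProduct,
    dotProduct_sub, dotProduct_comm x xbar]
  ring

variable [LinearOrder R] [IsStrictOrderedRing R]

theorem liftedForm_le_of_stationary {ν s sbar : R} {b x xbar : ι → R} (hν : 0 ≤ ν)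
    (hb : b + ν • xbar = 0) (hslack : ν * (xbar ⬝ᵥ xbar - sbar) = 0) (hs : x ⬝ᵥ x ≤ s) :
    liftedForm ν b sbar xbar ≤ liftedForm ν b s x := by
  have value_at_xbar : liftedForm ν b sbar xbar = -(ν * (xbar ⬝ᵥ xbar)) := by
    rw [liftedForm_eq_complete_square hb, sub_self, zero_dotProduct]
    linear_combination -hslack
  have gap_nonneg : 0 ≤ ν * (s - x ⬝ᵥ x) := mul_nonneg hν (sub_nonneg.2 hs)
  have square_nonneg : 0 ≤ ν * ((x - xbar) ⬝ᵥ (x - xbar)) :=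
    mul_nonneg hν (Fintype.sum_nonneg fun i => mul_self_nonneg ((x - xbar) i))
  rw [value_at_xbar, liftedForm_eq_complete_square hb]
  linarith

end LiftedForm

theorem isMinOn_of_lagrangian {R κ X : Type*} [CommRing R] [LinearOrder R] [IsStrictOrderedRing R]
    [Fintype κ] {J : X → R} {g : κ → X → R} {γ : κ → R} {S : Set X} {z : X}
    (hγ : ∀ k, 0 ≤ γ k) (hg : ∀ w ∈ S, ∀ k, g k w ≤ 0) (hslack : ∀ k, γ k * g k z = 0)
    (hL : IsMinOn (fun w => J w + ∑ k, γ k * g k w) S z) : IsMinOn J S z := by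
  intro w hw
  calc
    J z = J z + ∑ k, γ k * g k z := by rw [Fintype.sum_eq_zero _ hslack, add_zero]
    _ ≤ J w + ∑ k, γ k * g k w := hL hw
    _ ≤ J w := add_le_of_nonpos_right <|
      Finset.sum_nonpos fun k _ => mul_nonpos_of_nonneg_of_nonpos (hγ k) (hg w hw k)

/-- The data of an S-QCQP with variables indexed by `ι` and constraints indexed by `κ`: the
objective is `aJ ‖x‖² + 2 bJᵀ x + cJ` and the `k`-th constraint is
`a k ‖x‖² + 2 (b k)ᵀ x + c k ≤ 0`. -/
structure SQCQP (R ι κ : Type*) where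
  aJ : R
  bJ : ι → R
  cJ : R
  a : κ → R
  b : κ → ι → R
  c : κ → R

namespace SQCQP

variable {R ι κ : Type*} [CommRing R] [Fintype ι]

/-- The objective `J` of the S-QCQP. -/
def objective (P : SQCQP R ι κ) (x : ι → R) : R :=
  liftedForm P.aJ P.bJ (x ⬝ᵥ x) x + P.cJ

/-- The objective of SDP2 at a pair `(x, y)`; it omits the constant `cJ`. -/
def relaxedObjective (P : SQCQP R ι κ) (p : (ι → R) × (ι → R)) : R :=
  liftedForm P.aJ P.bJ (∑ i, p.2 i) p.1

theorem objective_eq_relaxedObjective_add (P : SQCQP R ι κ) (x : ι → R) :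
    P.objective x = P.relaxedObjective (x, fun i => x i ^ 2) + P.cJ := by
  rw [objective, relaxedObjective, dotProduct_self_eq_sum_sq]

variable [LinearOrder R]

/-- The feasible set of the S-QCQP. -/
def feasibleSet (P : SQCQP R ι κ) : Set (ι → R) :=
  {x | ∀ k, liftedForm (P.a k) (P.b k) (x ⬝ᵥ x) x + P.c k ≤ 0}

/-- The set of pairs `(x, y)` feasible for SDP2. -/
def relaxedFeasibleSet (P : SQCQP R ι κ) : Set ((ι → R) × (ι → R)) :=
  {p | (∀ k, liftedForm (P.a k) (P.b k) (∑ i, p.2 i) p.1 + P.c k ≤ 0) ∧ ∀ i, p.1 i ^ 2 ≤ p.2 i}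

/-- The KKT conditions of SDP2 at `(xbar, ybar)`, with multipliers `γ` for the constraints of the
S-QCQP. Stationarity in `y i` forces the multiplier of each constraint `x i ^ 2 ≤ y i` to be the
same number `ν`, so a single `ν` replaces these multipliers. -/
structure IsKKT [Fintype κ] (P : SQCQP R ι κ) (xbar ybar : ι → R) (γ : κ → R) (ν : R) : Prop where
  feasible : (xbar, ybar) ∈ P.relaxedFeasibleSet
  multiplier_nonneg : ∀ k, 0 ≤ γ k
  nu_eq : ν = P.aJ + ∑ k, γ k * P.a k
  nu_nonneg : 0 ≤ ν
  stationary : ∀ i, P.bJ i + (∑ k, γ k * P.b k i) + ν * xbar i = 0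
  slack : ∀ k, γ k * (liftedForm (P.a k) (P.b k) (∑ i, ybar i) xbar + P.c k) = 0
  slack_sq : ∀ i, ν * (xbar i ^ 2 - ybar i) = 0

variable {P : SQCQP R ι κ}

theorem mk_sq_mem_relaxedFeasibleSet_iff {x : ι → R} :
    (x, fun i => x i ^ 2) ∈ P.relaxedFeasibleSet ↔ x ∈ P.feasibleSet := by
  simp only [relaxedFeasibleSet, feasibleSet, Set.mem_ofPred_eq, le_refl, implies_true, and_true,
    dotProduct_self_eq_sum_sq]

variable [IsStrictOrderedRing R]

theorem isMinOn_objective_of_isMinOn_relaxedObjective {x : ι → R}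
    (h : IsMinOn P.relaxedObjective P.relaxedFeasibleSet (x, fun i => x i ^ 2)) :
    IsMinOn P.objective P.feasibleSet x := by
  intro z hz
  simpa only [Set.mem_ofPred_eq, objective_eq_relaxedObjective_add, add_le_add_iff_right] using
    h (mk_sq_mem_relaxedFeasibleSet_iff.2 hz)

namespace IsKKT

variable [Fintype κ] {xbar ybar : ι → R} {γ : κ → R} {ν : R}

theorem isMinOn_lagrangian (h : P.IsKKT xbar ybar γ ν) :
    IsMinOn (fun p => P.relaxedObjective p +
        ∑ k, γ k * (liftedForm (P.a k) (P.b k) (∑ i, p.2 i) p.1 + P.c k))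
      P.relaxedFeasibleSet (xbar, ybar) := by
  have stationary : (P.bJ + ∑ k, γ k • P.b k) + ν • xbar = 0 :=
    funext fun i => by simpa using h.stationary i
  have slack : ν * (xbar ⬝ᵥ xbar - ∑ i, ybar i) = 0 := by
    rw [dotProduct_self_eq_sum_sq, ← Finset.sum_sub_distrib, Finset.mul_sum]
    exact Fintype.sum_eq_zero _ h.slack_sq
  rintro ⟨x, y⟩ ⟨-, hxy⟩
  have sq_norm_le : x ⬝ᵥ x ≤ ∑ i, y i := by
    rw [dotProduct_self_eq_sum_sq]
    exact Finset.sum_le_sum fun i _ => hxy i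
  simp only [Set.mem_ofPred_eq, relaxedObjective, liftedForm_add_sum_mul, ← h.nu_eq]
  gcongr
  exact liftedForm_le_of_stationary h.nu_nonneg stationary slack sq_norm_le

theorem isMinOn_relaxedObjective (h : P.IsKKT xbar ybar γ ν) :
    IsMinOn P.relaxedObjective P.relaxedFeasibleSet (xbar, ybar) :=
  isMinOn_of_lagrangian h.multiplier_nonneg (fun _ hp => hp.1) h.slack h.isMinOn_lagrangian

theorem eq_sq (h : P.IsKKT xbar ybar γ ν) (hν : ν ≠ 0) (i : ι) : ybar i = xbar i ^ 2 :=
  (sub_eq_zero.1 ((mul_eq_zero.1 (h.slack_sq i)).resolve_left hν)).symm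

end IsKKT

end SQCQP

theorem stmt_18_general {R ι κ : Type*} [CommRing R] [LinearOrder R] [IsStrictOrderedRing R]
    [Fintype ι] [Fintype κ] {P : SQCQP R ι κ} {xbar ybar : ι → R} {γ : κ → R} {ν : R}
    (h : P.IsKKT xbar ybar γ ν) (hν : ν ≠ 0) :
    (∀ i, ybar i = xbar i ^ 2) ∧ xbar ∈ P.feasibleSet ∧
      IsMinOn P.objective P.feasibleSet xbar ∧
      IsMinOn P.relaxedObjective P.relaxedFeasibleSet (xbar, ybar) := by
  obtain rfl : ybar = fun i => xbar i ^ 2 := funext (h.eq_sq hν)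
  exact ⟨fun _ => rfl, SQCQP.mk_sq_mem_relaxedFeasibleSet_iff.1 h.feasible,
    SQCQP.isMinOn_objective_of_isMinOn_relaxedObjective h.isMinOn_relaxedObjective,
    h.isMinOn_relaxedObjective⟩

/-- If `(x̄, ȳ)` is feasible for the relaxation SDP2 of an S-QCQP and satisfies the
KKT conditions of SDP2 with multipliers `γ_k ≥ 0` and `ν := a_J + ∑ γ_k a_k > 0`,
then `ȳ_i = x̄_i²` for all `i`, `x̄` is feasible for the S-QCQP, and `x̄` is a global
minimizer of the S-QCQP; in particular SDP2 is exact. -/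
theorem stmt_18 (n m : ℕ)
    (aJ : ℝ) (a : Fin m → ℝ) (bJ : Fin n → ℝ) (b : Fin m → Fin n → ℝ)
    (cJ : ℝ) (c : Fin m → ℝ)
    (J : (Fin n → ℝ) → ℝ) (f : Fin m → (Fin n → ℝ) → ℝ)
    (hJ : ∀ x, J x = aJ * (x ⬝ᵥ x) + 2 * (bJ ⬝ᵥ x) + cJ)
    (hf : ∀ k x, f k x = a k * (x ⬝ᵥ x) + 2 * (b k ⬝ᵥ x) + c k)
    (xbar ybar : Fin n → ℝ)
    (hfeas1 : ∀ k, a k * (∑ i, ybar i) + 2 * (b k ⬝ᵥ xbar) + c k ≤ 0)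
    (hfeas2 : ∀ i, (xbar i) ^ 2 ≤ ybar i)
    (γ : Fin m → ℝ) (hγ : ∀ k, 0 ≤ γ k)
    (ν : ℝ) (hν : ν = aJ + ∑ k, γ k * a k)
    (hstat : ∀ i, bJ i + (∑ k, γ k * b k i) + ν * xbar i = 0)
    (hcomp : ∀ k, γ k * (a k * (∑ i, ybar i) + 2 * (b k ⬝ᵥ xbar) + c k) = 0)
    (hcompν : ∀ i, ν * ((xbar i) ^ 2 - ybar i) = 0)
    (hνpos : 0 < ν) :
    (∀ i, ybar i = (xbar i) ^ 2) ∧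
    (∀ k, f k xbar ≤ 0) ∧
    (∀ x : Fin n → ℝ, (∀ k, f k x ≤ 0) → J xbar ≤ J x) ∧
    -- exactness of SDP2: its optimal value equals the objective of SDP2 at (x̄, ȳ)
    sInf {t : ℝ | ∃ x y : Fin n → ℝ,
        (∀ k, a k * (∑ i, y i) + 2 * (b k ⬝ᵥ x) + c k ≤ 0) ∧
        (∀ i, (x i) ^ 2 ≤ y i) ∧
        t = aJ * (∑ i, y i) + 2 * (bJ ⬝ᵥ x)}
      = aJ * (∑ i, ybar i) + 2 * (bJ ⬝ᵥ xbar) := by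
  let P : SQCQP ℝ (Fin n) (Fin m) := ⟨aJ, bJ, cJ, a, b, c⟩
  have kkt : P.IsKKT xbar ybar γ ν :=
    ⟨⟨hfeas1, hfeas2⟩, hγ, hν, hνpos.le, hstat, hcomp, hcompν⟩
  obtain ⟨hsq, hfeas, hmin, hmin_relaxed⟩ := stmt_18_general kkt hνpos.ne'
  simp only [hJ, hf]
  refine ⟨hsq, hfeas, fun x hx => hmin hx,
    IsLeast.csInf_eq ⟨⟨xbar, ybar, hfeas1, hfeas2, rfl⟩, ?_⟩⟩
  rintro _ ⟨x, y, hcon, hxy, rfl⟩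
  exact hmin_relaxed (show (x, y) ∈ P.relaxedFeasibleSet from ⟨hcon, hxy⟩)
end

section
/- Consider problem (P1) with two constraints. Let γ_1 > 0 and set w := 1 + 2γ_1 a_1. Suppose w > 0, suppose γ_1 satisfies the equation a_1·(γ_1²/w²)·‖b_1‖² − (γ_1/w)·‖b_1‖² + c_1 = 0, and set x* := −(γ_1/w)·b_1. If g_2(x*) ≤ 0, then x* is a global minimizer of (P1): for every x ∈ ℝⁿ with g_1(x) ≤ 0 and g_2(x) ≤ 0 one has ½‖x‖² ≥ ½‖x*‖². -/
open Matrix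

/-!
The number `γ₁` is a Lagrange multiplier for the first constraint. Completing the square writes the
Lagrangian `½‖x‖² + γ₁ g₁(x)` as `(w / 2)‖x + (γ₁ / w) b₁‖²` plus a constant, so `w > 0` makes `x*`
a global minimizer of the Lagrangian, even where `g₁` is not convex. The equation for `γ₁` says
`g₁(x*) = 0`, and weak duality then bounds `½‖x‖²` below by `½‖x*‖²` wherever `g₁ ≤ 0`.
-/

theorem isMinOn_of_isMinOn_lagrangian_s19 {α R : Type*} [Semiring R] [PartialOrder R]
    [IsOrderedRing R] {J g : α → R} {s : Set α} {x₀ : α} {γ : R} (hγ : 0 ≤ γ)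
    (hL : IsMinOn (fun x ↦ J x + γ * g x) s x₀) (hslack : γ * g x₀ = 0)
    (hs : ∀ x ∈ s, g x ≤ 0) : IsMinOn J s x₀ :=
  isMinOn_iff.2 fun x hx ↦ calc
    J x₀ = J x₀ + γ * g x₀ := by rw [hslack, add_zero]
    _ ≤ J x + γ * g x := isMinOn_iff.1 hL x hx
    _ ≤ J x := add_le_of_nonpos_right (mul_nonpos_of_nonneg_of_nonpos hγ (hs x hx))

section CommRing

variable {R M : Type*} [CommRing R] [AddCommGroup M] [Module R M]

theorem quadratic_apply_neg_smul (B : LinearMap.BilinForm R M) (a c t : R) (b : M) :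
    a * B (-(t • b)) (-(t • b)) + B b (-(t • b)) + c = a * t ^ 2 * B b b - t * B b b + c := by
  simp only [map_neg, map_smul, LinearMap.neg_apply, LinearMap.smul_apply, smul_eq_mul]
  ring

theorem bilinForm_add_smul_self {B : LinearMap.BilinForm R M} (hB : B.IsSymm) (t : R)
    (b x : M) :
    B (x + t • b) (x + t • b) = B x x + 2 * t * B b x + t ^ 2 * B b b := by
  simp only [map_add, map_smul, LinearMap.add_apply, LinearMap.smul_apply, smul_eq_mul, hB.eq x b]
  ring

end CommRing

section Field

variable {K M : Type*} [Field K] [AddCommGroup M] [Module K M] {B : LinearMap.BilinForm K M}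

theorem lagrangian_eq_completed_square [NeZero (2 : K)] (hB : B.IsSymm) (a c : K) (b x : M)
    {γ w : K} (hw : w = 1 + 2 * γ * a) (hw₀ : w ≠ 0) :
    1 / 2 * B x x + γ * (a * B x x + B b x + c) =
      w / 2 * B (x + (γ / w) • b) (x + (γ / w) • b) + (γ * c - γ ^ 2 / (2 * w) * B b b) := by
  rw [bilinForm_add_smul_self hB]
  field_simp
  rw [hw]
  ring

variable [LinearOrder K] [IsStrictOrderedRing K]

theorem isMinOn_lagrangian (hB : B.IsPosSemidef) (a c : K) (b : M) {γ w : K}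
    (hw : w = 1 + 2 * γ * a) (hw₀ : 0 < w) :
    IsMinOn (fun x ↦ 1 / 2 * B x x + γ * (a * B x x + B b x + c)) Set.univ (-((γ / w) • b)) := by
  refine isMinOn_univ_iff.2 fun x ↦ ?_
  have hsquare : 0 ≤ w / 2 * B (x + (γ / w) • b) (x + (γ / w) • b) :=
    mul_nonneg (half_pos hw₀).le (hB.nonneg _)
  simp only [lagrangian_eq_completed_square hB.isSymm a c b _ hw hw₀.ne', neg_add_cancel,
    map_zero, mul_zero]
  gcongr

theorem stmt_19_general (hB : B.IsPosSemidef) (a c : K) (b : M) {γ w : K} (hγ : 0 ≤ γ)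
    (hw : w = 1 + 2 * γ * a) (hw₀ : 0 < w)
    (heq : a * (γ ^ 2 / w ^ 2) * B b b - γ / w * B b b + c = 0) :
    IsMinOn (fun x ↦ 1 / 2 * B x x) {x | a * B x x + B b x + c ≤ 0} (-((γ / w) • b)) := by
  refine isMinOn_of_isMinOn_lagrangian_s19 (g := fun x ↦ a * B x x + B b x + c) hγ
    ((isMinOn_lagrangian hB a c b hw hw₀).on_subset (Set.subset_univ _)) ?_ fun _ hx ↦ hx
  rw [quadratic_apply_neg_smul, div_pow, heq, mul_zero]

end Field

theorem isPosSemidef_dotProductBilin (ι R : Type*) [Fintype ι] [CommRing R] [LinearOrder R]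
    [IsOrderedRing R] :
    LinearMap.BilinForm.IsPosSemidef (dotProductBilin R R : LinearMap.BilinForm R (ι → R)) where
  eq := dotProduct_comm
  nonneg x := Finset.sum_nonneg fun i _ ↦ mul_self_nonneg (x i)

/-- Problem (P1), single active constraint, case `w > 0`: if `γ₁ > 0`,
`w := 1 + 2γ₁a₁ > 0`, `γ₁` solves `a₁(γ₁²/w²)‖b₁‖² − (γ₁/w)‖b₁‖² + c₁ = 0`, and
`x* := −(γ₁/w)·b₁` satisfies `g₂(x*) ≤ 0`, then `x*` is a global minimizer of (P1). -/
theorem stmt_19 (n : ℕ) (a1 a2 : ℝ) (b1 b2 : Fin n → ℝ) (c1 c2 : ℝ)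
    (g1 g2 : (Fin n → ℝ) → ℝ)
    (hg1 : ∀ x, g1 x = a1 * (x ⬝ᵥ x) + b1 ⬝ᵥ x + c1)
    (hg2 : ∀ x, g2 x = a2 * (x ⬝ᵥ x) + b2 ⬝ᵥ x + c2)
    (γ1 : ℝ) (hγ1 : 0 < γ1)
    (w : ℝ) (hw : w = 1 + 2 * γ1 * a1) (hwpos : 0 < w)
    (heq : a1 * (γ1 ^ 2 / w ^ 2) * (b1 ⬝ᵥ b1) - (γ1 / w) * (b1 ⬝ᵥ b1) + c1 = 0)
    (xstar : Fin n → ℝ) (hx : xstar = -((γ1 / w) • b1))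
    (hfeas2 : g2 xstar ≤ 0) :
    ∀ x : Fin n → ℝ, g1 x ≤ 0 → g2 x ≤ 0 →
      (1 / 2) * (xstar ⬝ᵥ xstar) ≤ (1 / 2) * (x ⬝ᵥ x) := by
  subst hx
  exact fun x hx1 _ ↦ stmt_19_general (isPosSemidef_dotProductBilin (Fin n) ℝ) a1 c1 b1 hγ1.le hw
    hwpos heq ((hg1 x).symm.trans_le hx1)
end
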